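/- Let (X_1,…,X_r) have the GEV_r density f_r with parameters μ ∈ ℝ, σ > 0, ξ ≠ 0. Then for every j with 1 ≤ j ≤ r, E[(1+ξ Z_j)^{−1/ξ}] = j. -/

import Mathlib

open MeasureTheory ProbabilityTheory Real Filter Topology

/-- The joint density of the `r` largest order statistics limit (GEV_r) with
location `μ`, scale `σ`, and shape `ξ ≠ 0`.  The coordinates are in decreasing
order: `x 0` is `x_1` (the largest) and `x ⟨r-1,_⟩` is `x_r`. -/
noncomputable def gevrDensity (μ σ ξ : ℝ) (r : ℕ) (x : Fin r → ℝ) : ℝ :=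
  if h : 0 < r ∧ StrictAnti x ∧ (∀ j, 0 < 1 + ξ * ((x j - μ) / σ)) then
    (σ ^ r)⁻¹ * Real.exp
      (-(1 + ξ * ((x ⟨r - 1, Nat.sub_lt h.1 Nat.one_pos⟩ - μ) / σ)) ^ (-1 / ξ)
        - (1 / ξ + 1) * ∑ j, Real.log (1 + ξ * ((x j - μ) / σ)))
  else 0

/-- The GEV_r probability measure on `ℝ^r`, given by the density `gevrDensity`. -/
noncomputable def gevrMeasure (μ σ ξ : ℝ) (r : ℕ) : Measure (Fin r → ℝ) :=
  MeasureTheory.volume.withDensity fun x => ENNReal.ofReal (gevrDensity μ σ ξ r x)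


open scoped ENNReal

lemma gevr_peel (ν : Measure ℝ) [SigmaFinite ν] (n : ℕ) (F : (Fin (n+1) → ℝ) → ℝ≥0∞)
    (hF : Measurable F) :
    ∫⁻ x, F x ∂(Measure.pi fun _ : Fin (n+1) => ν)
      = ∫⁻ y, ∫⁻ v, F (Fin.snoc (α := fun _ => ℝ) y v) ∂ν ∂(Measure.pi fun _ : Fin n => ν) := by
  have h := measurePreserving_piFinSuccAbove (fun _ : Fin (n+1) => ν) (Fin.last n)
  have h2 := h.symm.lintegral_comp hF
  rw [← h2, lintegral_prod_symm']
  · refine lintegral_congr fun y => lintegral_congr fun v => ?_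
    congr 1
    rw [← Fin.insertNth_last']
    rfl
  · exact hF.comp (MeasurableEquiv.measurable _)

lemma gevr_prod_lintegral (n : ℕ) (f : Fin n → ℝ → ℝ≥0∞) (hf : ∀ i, Measurable (f i)) :
    ∫⁻ x : Fin n → ℝ, ∏ i, f i (x i) = ∏ i, ∫⁻ v, f i v := by
  induction n with
  | zero => simp [volume_pi]
  | succ n ih =>
    rw [volume_pi, gevr_peel _ _ _ (by fun_prop)]
    simp_rw [Fin.prod_univ_castSucc, Fin.snoc_castSucc, Fin.snoc_last]
    simp_rw [lintegral_const_mul _ (hf _)]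
    rw [lintegral_mul_const _ (by fun_prop), ← volume_pi, ih _ (fun i => hf _)]

lemma gevr_pi_withDensity (n : ℕ) (d : ℝ → ℝ≥0∞) (hd : Measurable d)
    [SigmaFinite ((volume : Measure ℝ).withDensity d)] :
    (Measure.pi fun _ : Fin n => (volume : Measure ℝ).withDensity d)
      = (volume : Measure (Fin n → ℝ)).withDensity (fun x => ∏ i, d (x i)) := by
  refine Measure.pi_eq fun s hs => ?_
  rw [withDensity_apply _ (MeasurableSet.univ_pi hs), ← lintegral_indicator (MeasurableSet.univ_pi hs)]
  have : ∀ x : Fin n → ℝ, (Set.univ.pi s).indicator (fun x => ∏ i, d (x i)) x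
      = ∏ i, (s i).indicator d (x i) := by
    intro x
    by_cases hx : x ∈ Set.univ.pi s
    · rw [Set.indicator_of_mem hx]
      refine Finset.prod_congr rfl fun i _ => ?_
      rw [Set.indicator_of_mem (hx i (Set.mem_univ i))]
    · rw [Set.indicator_of_notMem hx]
      simp only [Set.mem_pi, Set.mem_univ, true_imp_iff, not_forall] at hx
      obtain ⟨i, hi⟩ := hx
      exact (Finset.prod_eq_zero (Finset.mem_univ i) (Set.indicator_of_notMem hi _)).symm
  simp_rw [this]
  rw [gevr_prod_lintegral n _ (fun i => hd.indicator (hs i))]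
  refine Finset.prod_congr rfl fun i _ => ?_
  rw [lintegral_indicator (hs i), withDensity_apply _ (hs i)]

lemma gevr_strictMono_snoc (n : ℕ) (y : Fin (n+1) → ℝ) (v : ℝ) :
    StrictMono (Fin.snoc (α := fun _ => ℝ) y v : Fin (n+2) → ℝ) ↔ StrictMono y ∧ y (Fin.last n) < v := by
  rw [Fin.strictMono_iff_lt_succ, Fin.strictMono_iff_lt_succ, Fin.forall_fin_succ']
  simp only [Fin.snoc_castSucc, Fin.succ_last, Fin.snoc_last, ← Fin.castSucc_succ]

lemma gevr_meas_sm (n : ℕ) : MeasurableSet {y : Fin (n+1) → ℝ | StrictMono y} := by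
  simp_rw [Fin.strictMono_iff_lt_succ, Set.ofPred_forall]
  exact MeasurableSet.iInter fun i => measurableSet_lt (by fun_prop) (by fun_prop)

lemma gevr_pow_int (m : ℕ) (c v : ℝ) (hc : 0 ≤ c) (hv : 0 < v) :
    ∫⁻ u in Set.Ioi (0:ℝ), (if u < v then ENNReal.ofReal (c * u^m / m.factorial) else 0)
      = ENNReal.ofReal (c * v^(m+1) / (m+1).factorial) := by
  have e : ∀ u : ℝ, (if u < v then ENNReal.ofReal (c * u^m / m.factorial) else 0)
      = (Set.Iio v).indicator (fun u => ENNReal.ofReal (c * u^m / m.factorial)) u := by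
    intro u; simp [Set.indicator]
  simp_rw [e]
  rw [lintegral_indicator measurableSet_Iio, Measure.restrict_restrict measurableSet_Iio,
    Set.inter_comm, Set.Ioi_inter_Iio, restrict_Ioo_eq_restrict_Ioc,
    ← ofReal_integral_eq_lintegral_ofReal]
  · rw [← intervalIntegral.integral_of_le hv.le, intervalIntegral.integral_div,
      intervalIntegral.integral_const_mul, integral_pow]
    congr 1
    rw [Nat.factorial_succ]; push_cast
    have : (m.factorial : ℝ) ≠ 0 := by positivity
    field_simp
    simp
  · exact Continuous.integrableOn_Ioc (by fun_prop)
  · refine (ae_restrict_mem measurableSet_Ioc).mono fun u hu => ?_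
    have := hu.1
    simp only [Pi.zero_apply]; positivity

/-- one induction step -/
lemma gevr_step (n m : ℕ) (c : ℝ) (hc : 0 ≤ c) (φ : (Fin (n+1) → ℝ) → ℝ≥0∞) (hφ : Measurable φ)
    (ih : ∀ h : ℝ → ℝ≥0∞, Measurable h →
      ∫⁻ y, {y : Fin (n+1) → ℝ | StrictMono y}.indicator (fun y => φ y * h (y (Fin.last n))) y
        ∂(Measure.pi fun _ => (volume : Measure ℝ).restrict (Set.Ioi 0))
      = ∫⁻ v in Set.Ioi (0:ℝ), ENNReal.ofReal (c * v^m / m.factorial) * h v)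
    (h : ℝ → ℝ≥0∞) (hh : Measurable h) :
    ∫⁻ y, {y : Fin (n+2) → ℝ | StrictMono y}.indicator
        (fun y => φ (fun i => y i.castSucc) * h (y (Fin.last (n+1)))) y
        ∂(Measure.pi fun _ => (volume : Measure ℝ).restrict (Set.Ioi 0))
      = ∫⁻ v in Set.Ioi (0:ℝ), ENNReal.ofReal (c * v^(m+1) / (m+1).factorial) * h v := by
  set ν := (volume : Measure ℝ).restrict (Set.Ioi 0)
  have hm2 : Measurable (Function.uncurry fun (u v : ℝ) => if u < v then h v else 0) := by
    exact Measurable.ite (measurableSet_lt measurable_fst measurable_snd)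
      (hh.comp measurable_snd) measurable_const
  rw [gevr_peel ν _ _ (Measurable.indicator (by fun_prop) (gevr_meas_sm _))]
  have e1 : ∀ y : Fin (n+1) → ℝ, ∫⁻ v, {y : Fin (n+2) → ℝ | StrictMono y}.indicator
        (fun y => φ (fun i => y i.castSucc) * h (y (Fin.last (n+1))))
          (Fin.snoc (α := fun _ => ℝ) y v) ∂ν
      = {y : Fin (n+1) → ℝ | StrictMono y}.indicator (fun y => φ y *
          (fun u => ∫⁻ v, (if u < v then h v else 0) ∂ν) (y (Fin.last n))) y := by
    intro y
    by_cases hy : StrictMono y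
    · rw [Set.indicator_of_mem hy]
      dsimp only
      rw [← lintegral_const_mul _ (hm2.of_uncurry_left)]
      refine lintegral_congr fun v => ?_
      by_cases hv : y (Fin.last n) < v
      · rw [Set.indicator_of_mem ((gevr_strictMono_snoc n y v).2 ⟨hy, hv⟩), if_pos hv]
        simp only [Fin.snoc_castSucc, Fin.snoc_last]
      · rw [Set.indicator_of_notMem (fun hc => hv ((gevr_strictMono_snoc n y v).1 hc).2), if_neg hv,
          mul_zero]
    · rw [Set.indicator_of_notMem hy]
      rw [← lintegral_zero (μ := ν)]
      refine lintegral_congr fun v => ?_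
      rw [Set.indicator_of_notMem (fun hc => hy ((gevr_strictMono_snoc n y v).1 hc).1)]
  simp_rw [e1]
  rw [ih (fun u => ∫⁻ v, (if u < v then h v else 0) ∂ν) (hm2.lintegral_prod_right')]
  simp_rw [← lintegral_const_mul _ (hm2.of_uncurry_left)]
  rw [lintegral_lintegral_swap]
  · refine lintegral_congr_ae ((ae_restrict_mem measurableSet_Ioi).mono fun v hv => ?_)
    dsimp only
    rw [← gevr_pow_int m c v hc hv, ← lintegral_mul_const]
    · refine lintegral_congr fun u => ?_
      split_ifs <;> simp
    · exact Measurable.ite measurableSet_Iio (by fun_prop) measurable_const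
  · refine Measurable.aemeasurable (Measurable.mul (by fun_prop) hm2)

lemma gevr_mass (n : ℕ) (h : ℝ → ℝ≥0∞) (hh : Measurable h) :
    ∫⁻ y, {y : Fin (n+1) → ℝ | StrictMono y}.indicator (fun y => h (y (Fin.last n))) y
        ∂(Measure.pi fun _ => (volume : Measure ℝ).restrict (Set.Ioi 0))
      = ∫⁻ v in Set.Ioi (0:ℝ), ENNReal.ofReal (v^n / n.factorial) * h v := by
  induction n generalizing h with
  | zero =>
    rw [gevr_peel _ _ _ (Measurable.indicator (by fun_prop) (gevr_meas_sm _))]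
    have : ∀ y : Fin 1 → ℝ, StrictMono y := fun y => Subsingleton.strictMono y
    simp [this, Set.indicator, Fin.snoc]
  | succ n ih =>
    have := gevr_step n n 1 zero_le_one (fun _ => 1) measurable_const
      (fun h hh => by simpa using ih h hh) h hh
    simpa using this

lemma gevr_mom (n : ℕ) (j : Fin (n+1)) (h : ℝ → ℝ≥0∞) (hh : Measurable h) :
    ∫⁻ y, {y : Fin (n+1) → ℝ | StrictMono y}.indicator
        (fun y => ENNReal.ofReal (y j) * h (y (Fin.last n))) y
        ∂(Measure.pi fun _ => (volume : Measure ℝ).restrict (Set.Ioi 0))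
      = ∫⁻ v in Set.Ioi (0:ℝ),
        ENNReal.ofReal (((j : ℕ) + 1 : ℝ) * v^(n+1) / (n+1).factorial) * h v := by
  have hlast : ∀ (n : ℕ) (h : ℝ → ℝ≥0∞) (hh : Measurable h),
    ∫⁻ y, {y : Fin (n+1) → ℝ | StrictMono y}.indicator
        (fun y => ENNReal.ofReal (y (Fin.last n)) * h (y (Fin.last n))) y
        ∂(Measure.pi fun _ => (volume : Measure ℝ).restrict (Set.Ioi 0))
      = ∫⁻ v in Set.Ioi (0:ℝ),
        ENNReal.ofReal (((Fin.last n : Fin (n+1)) + 1 : ℝ) * v^(n+1) / (n+1).factorial) * h v := by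
    intro n h hh
    rw [gevr_mass n (fun v => ENNReal.ofReal v * h v) (by fun_prop)]
    refine lintegral_congr_ae ((ae_restrict_mem measurableSet_Ioi).mono fun v hv => ?_)
    have hv : 0 < v := hv
    dsimp only
    rw [← mul_assoc, ← ENNReal.ofReal_mul (by positivity)]
    congr 2
    rw [Nat.factorial_succ, Fin.val_last]; push_cast
    have : (n.factorial : ℝ) ≠ 0 := by positivity
    field_simp
    ring
  induction n generalizing h with
  | zero =>
    obtain rfl : j = Fin.last 0 := by ext; simp
    exact hlast _ h hh
  | succ n ih =>
    induction j using Fin.lastCases with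
    | last => exact hlast _ h hh
    | cast j =>
      exact gevr_step n (n+1) ((j : ℕ) + 1 : ℝ) (by positivity) (fun y => ENNReal.ofReal (y j))
        (by fun_prop) (fun h hh => ih j h hh) h hh

lemma gevr_final (n : ℕ) (c : ℝ) (hc : 0 ≤ c) :
    ∫⁻ v in Set.Ioi (0:ℝ), ENNReal.ofReal (c * v^(n+1) / (n+1).factorial)
      * ENNReal.ofReal (Real.exp (-v)) = ENNReal.ofReal c := by
  have hpos : (0:ℝ) < ((n+1 : ℕ) : ℝ) + 1 := by positivity
  have hi := (Real.GammaIntegral_convergent hpos)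
  have hg := Real.Gamma_eq_integral hpos
  rw [Real.Gamma_nat_eq_factorial] at hg
  have hf : ((n+1).factorial : ℝ) ≠ 0 := by positivity
  have e : ∫⁻ v in Set.Ioi (0:ℝ), ENNReal.ofReal (c * v^(n+1) / (n+1).factorial)
      * ENNReal.ofReal (Real.exp (-v)) = ∫⁻ v in Set.Ioi (0:ℝ),
        ENNReal.ofReal (c / (n+1).factorial *
          (Real.exp (-v) * v ^ (((n+1 : ℕ) : ℝ) + 1 - 1))) := by
    refine lintegral_congr_ae ((ae_restrict_mem measurableSet_Ioi).mono fun v hv => ?_)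
    have hv : 0 < v := hv
    dsimp only
    rw [← ENNReal.ofReal_mul (by positivity), add_sub_cancel_right, Real.rpow_natCast]
    congr 1
    ring
  rw [e, ← ofReal_integral_eq_lintegral_ofReal (hi.const_mul _), integral_const_mul, ← hg]
  · congr 1; field_simp
  · refine (ae_restrict_mem measurableSet_Ioi).mono fun v hv => ?_
    have hv : 0 < v := hv
    simp only [Pi.zero_apply]; positivity

/-- the one-dimensional transform -/
noncomputable def gevrW (μ σ ξ x : ℝ) : ℝ := (1 + ξ * ((x - μ) / σ)) ^ (-1 / ξ)

/-- the one-dimensional support -/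
def gevrS (μ σ ξ : ℝ) : Set ℝ := {x | 0 < 1 + ξ * ((x - μ) / σ)}

/-- the absolute value of the derivative of the transform on the support -/
noncomputable def gevrD (μ σ ξ : ℝ) : ℝ → ℝ :=
  (gevrS μ σ ξ).indicator fun x => σ⁻¹ * (1 + ξ * ((x - μ) / σ)) ^ (-1 / ξ - 1)

lemma gevrS_meas (μ σ ξ : ℝ) : MeasurableSet (gevrS μ σ ξ) :=
  measurableSet_lt (by fun_prop) (by fun_prop)

lemma gevrW_meas (μ σ ξ : ℝ) : Measurable (gevrW μ σ ξ) := by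
  unfold gevrW; fun_prop

lemma gevrD_meas (μ σ ξ : ℝ) : Measurable (gevrD μ σ ξ) :=
  Measurable.indicator (by fun_prop) (gevrS_meas μ σ ξ)

lemma gevrD_nonneg (μ σ ξ : ℝ) (hσ : 0 < σ) (x : ℝ) : 0 ≤ gevrD μ σ ξ x := by
  refine Set.indicator_nonneg (fun x hx => ?_) x
  have : 0 < 1 + ξ * ((x - μ) / σ) := hx
  positivity

lemma gevrW_anti (μ σ ξ : ℝ) (hσ : 0 < σ) (hξ : ξ ≠ 0) :
    StrictAntiOn (gevrW μ σ ξ) (gevrS μ σ ξ) := by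
  intro a ha b hb hab
  have ha : 0 < 1 + ξ * ((a - μ) / σ) := ha
  have hb : 0 < 1 + ξ * ((b - μ) / σ) := hb
  have h : (a - μ) / σ < (b - μ) / σ := by gcongr
  unfold gevrW
  rcases lt_or_gt_of_ne hξ with h0 | h0
  · apply Real.rpow_lt_rpow hb.le
    · nlinarith
    · exact div_pos_of_neg_of_neg (by norm_num) h0
  · apply Real.rpow_lt_rpow_of_neg ha
    · nlinarith
    · exact div_neg_of_neg_of_pos (by norm_num) h0

lemma gevrW_deriv (μ σ ξ : ℝ) (hξ : ξ ≠ 0) (x : ℝ) (hx : x ∈ gevrS μ σ ξ) :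
    HasDerivAt (gevrW μ σ ξ) (-(σ⁻¹ * (1 + ξ * ((x - μ) / σ)) ^ (-1 / ξ - 1))) x := by
  have hx : 0 < 1 + ξ * ((x - μ) / σ) := hx
  have h1 : HasDerivAt (fun x => 1 + ξ * ((x - μ) / σ)) (ξ * (1 / σ)) x :=
    (((((hasDerivAt_id x).sub_const μ).div_const σ).const_mul ξ).const_add 1)
  have h2 := h1.rpow_const (p := -1 / ξ) (Or.inl hx.ne')
  refine h2.congr_deriv ?_
  field_simp

lemma gevrW_image (μ σ ξ : ℝ) (hσ : 0 < σ) (hξ : ξ ≠ 0) :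
    gevrW μ σ ξ '' gevrS μ σ ξ = Set.Ioi 0 := by
  ext v
  constructor
  · rintro ⟨x, hx, rfl⟩
    exact Real.rpow_pos_of_pos hx _
  · intro hv
    have hv : 0 < v := hv
    have e : 1 + ξ * ((μ + σ * ((v ^ (-ξ) - 1) / ξ) - μ) / σ) = v ^ (-ξ) := by
      field_simp; ring
    refine ⟨μ + σ * ((v ^ (-ξ) - 1) / ξ), ?_, ?_⟩
    · change 0 < 1 + ξ * ((μ + σ * ((v ^ (-ξ) - 1) / ξ) - μ) / σ)
      rw [e]; positivity
    · unfold gevrW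
      rw [e, ← Real.rpow_mul hv.le]
      have : -ξ * (-1 / ξ) = 1 := by field_simp
      rw [this, Real.rpow_one]

lemma gevrW_mp (μ σ ξ : ℝ) (hσ : 0 < σ) (hξ : ξ ≠ 0) :
    MeasurePreserving (gevrW μ σ ξ)
      ((volume : Measure ℝ).withDensity fun x => ENNReal.ofReal (gevrD μ σ ξ x))
      ((volume : Measure ℝ).restrict (Set.Ioi 0)) := by
  refine ⟨gevrW_meas μ σ ξ, ?_⟩
  ext A hA
  have hWA := gevrW_meas μ σ ξ hA
  rw [Measure.map_apply (gevrW_meas μ σ ξ) hA, withDensity_apply _ hWA,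
    ← lintegral_indicator_one hA, ← gevrW_image μ σ ξ hσ hξ,
    lintegral_image_eq_lintegral_abs_deriv_mul (gevrS_meas μ σ ξ)
      (fun x hx => (gevrW_deriv μ σ ξ hξ x hx).hasDerivWithinAt) (gevrW_anti μ σ ξ hσ hξ).injOn,
    ← lintegral_indicator hWA, ← lintegral_indicator (gevrS_meas μ σ ξ)]
  refine lintegral_congr fun x => ?_
  by_cases hx : x ∈ gevrS μ σ ξ
  · have hx' : 0 < 1 + ξ * ((x - μ) / σ) := hx
    rw [Set.indicator_of_mem hx, abs_neg, abs_of_nonneg (by positivity)]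
    by_cases hxA : gevrW μ σ ξ x ∈ A
    · rw [Set.indicator_of_mem hxA, Set.indicator_of_mem (show x ∈ gevrW μ σ ξ ⁻¹' A from hxA)]
      simp [gevrD, hx]
    · rw [Set.indicator_of_notMem hxA, Set.indicator_of_notMem (show x ∉ gevrW μ σ ξ ⁻¹' A from hxA)]
      simp
  · rw [Set.indicator_of_notMem hx]
    have : gevrD μ σ ξ x = 0 := Set.indicator_of_notMem hx _
    simp [Set.indicator, this]

lemma gevr_density_eq (μ σ ξ : ℝ) (hσ : 0 < σ) (hξ : ξ ≠ 0) (n : ℕ) (x : Fin (n+1) → ℝ) :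
    ENNReal.ofReal (gevrDensity μ σ ξ (n+1) x)
      = (∏ i, ENNReal.ofReal (gevrD μ σ ξ (x i))) *
        {y : Fin (n+1) → ℝ | StrictMono y}.indicator
          (fun y => ENNReal.ofReal (Real.exp (-(y (Fin.last n))))) (fun i => gevrW μ σ ξ (x i)) := by
  by_cases hS : ∀ i, x i ∈ gevrS μ σ ξ
  · have hS' : ∀ j, 0 < 1 + ξ * ((x j - μ) / σ) := hS
    have hiff : StrictAnti x ↔ StrictMono (fun i => gevrW μ σ ξ (x i)) := by
      constructor
      · intro h a b hab
        exact gevrW_anti μ σ ξ hσ hξ (hS _) (hS _) (h hab)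
      · intro h a b hab
        exact ((gevrW_anti μ σ ξ hσ hξ).lt_iff_gt (hS _) (hS _)).1 (h hab)
    by_cases hx : StrictAnti x
    · rw [Set.indicator_of_mem (hiff.1 hx), gevrDensity, dif_pos ⟨n.succ_pos, hx, hS'⟩,
        ← ENNReal.ofReal_prod_of_nonneg (fun i _ => gevrD_nonneg μ σ ξ hσ _),
        ← ENNReal.ofReal_mul (Finset.prod_nonneg (fun i _ => gevrD_nonneg μ σ ξ hσ _))]
      congr 1
      have e : ∀ i, gevrD μ σ ξ (x i)
          = σ⁻¹ * Real.exp (-(1 / ξ + 1) * Real.log (1 + ξ * ((x i - μ) / σ))) := by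
        intro i
        rw [gevrD, Set.indicator_of_mem (hS i), Real.rpow_def_of_pos (hS' i)]
        congr 2; ring
      simp_rw [e]
      rw [Finset.prod_mul_distrib, ← Real.exp_sum, ← Finset.mul_sum, Finset.prod_const,
        Finset.card_univ, Fintype.card_fin, mul_assoc, ← Real.exp_add, inv_pow]
      congr 2
      change -(gevrW μ σ ξ (x (Fin.last n))) - _ = _
      ring
    · rw [Set.indicator_of_notMem (fun h => hx (hiff.2 h)), gevrDensity,
        dif_neg (fun h => hx h.2.1)]
      simp
  · rw [gevrDensity, dif_neg (fun h => hS h.2.2)]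
    push Not at hS
    obtain ⟨i, hi⟩ := hS
    rw [Finset.prod_eq_zero (Finset.mem_univ i)]
    · simp
    · rw [gevrD, Set.indicator_of_notMem hi]; simp

lemma gevr_main (μ σ ξ : ℝ) (hσ : 0 < σ) (hξ : ξ ≠ 0) (n : ℕ) (j : Fin (n+1)) :
    ∫ x : Fin (n+1) → ℝ, gevrW μ σ ξ (x j) ∂(gevrMeasure μ σ ξ (n+1)) = (j : ℕ) + 1 := by
  have hW := gevrW_meas μ σ ξ
  have hD := gevrD_meas μ σ ξ
  have hsm := gevr_meas_sm n
  have hWW : Measurable (fun (x : Fin (n+1) → ℝ) i => gevrW μ σ ξ (x i)) := by fun_prop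
  have hm1 : Measurable (fun x : Fin (n+1) → ℝ => ∏ i, ENNReal.ofReal (gevrD μ σ ξ (x i))) := by
    fun_prop
  have hm2 : Measurable ({y : Fin (n+1) → ℝ | StrictMono y}.indicator
          (fun y => ENNReal.ofReal (Real.exp (-(y (Fin.last n)))))) :=
    Measurable.indicator (by fun_prop) hsm
  have hdm : Measurable fun x => ENNReal.ofReal (gevrDensity μ σ ξ (n+1) x) := by
    simp_rw [gevr_density_eq μ σ ξ hσ hξ n]
    exact hm1.mul (hm2.comp hWW)
  rw [integral_eq_lintegral_of_nonneg_ae]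
  · have key : ∫⁻ x : Fin (n+1) → ℝ, ENNReal.ofReal (gevrW μ σ ξ (x j)) ∂(gevrMeasure μ σ ξ (n+1))
        = ENNReal.ofReal ((j : ℕ) + 1) := by
      rw [gevrMeasure, lintegral_withDensity_eq_lintegral_mul _ hdm (by fun_prop)]
      set H := {y : Fin (n+1) → ℝ | StrictMono y}.indicator
        (fun y => ENNReal.ofReal (y j) * ENNReal.ofReal (Real.exp (-(y (Fin.last n))))) with hH
      have hHm : Measurable H := Measurable.indicator (by fun_prop) hsm
      have e : ∀ x : Fin (n+1) → ℝ, ((fun x => ENNReal.ofReal (gevrDensity μ σ ξ (n+1) x)) *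
          fun x : Fin (n+1) → ℝ => ENNReal.ofReal (gevrW μ σ ξ (x j))) x
          = ((fun x : Fin (n+1) → ℝ => ∏ i, ENNReal.ofReal (gevrD μ σ ξ (x i))) *
            fun x : Fin (n+1) → ℝ => H (fun i => gevrW μ σ ξ (x i))) x := by
        intro x
        simp only [Pi.mul_apply]
        rw [gevr_density_eq μ σ ξ hσ hξ n, mul_assoc]
        congr 1
        rw [hH]
        by_cases h : StrictMono (fun i => gevrW μ σ ξ (x i))
        · rw [Set.indicator_of_mem h, Set.indicator_of_mem h, mul_comm]
        · rw [Set.indicator_of_notMem h, Set.indicator_of_notMem h, zero_mul]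
      rw [lintegral_congr e, ← lintegral_withDensity_eq_lintegral_mul _ hm1 (show Measurable (fun x : Fin (n+1) → ℝ => H (fun i => gevrW μ σ ξ (x i))) from hHm.comp hWW),
        ← gevr_pi_withDensity (n+1) (fun v => ENNReal.ofReal (gevrD μ σ ξ v)) (by fun_prop)]
      have mp := measurePreserving_pi
        (fun _ : Fin (n+1) => (volume : Measure ℝ).withDensity
          fun x => ENNReal.ofReal (gevrD μ σ ξ x))
        (fun _ : Fin (n+1) => (volume : Measure ℝ).restrict (Set.Ioi 0))
        (fun _ => gevrW_mp μ σ ξ hσ hξ)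
      rw [mp.lintegral_comp hHm, hH,
        gevr_mom n j (fun v => ENNReal.ofReal (Real.exp (-v))) (by fun_prop),
        gevr_final n _ (by positivity)]
    rw [key, ENNReal.toReal_ofReal (by positivity)]
  · rw [gevrMeasure, Filter.EventuallyLE, ae_withDensity_iff hdm]
    refine Filter.Eventually.of_forall fun x hx => ?_
    by_cases h : x j ∈ gevrS μ σ ξ
    · exact Real.rpow_nonneg (le_of_lt h) _
    · refine absurd ?_ hx
      rw [gevrDensity, dif_neg (fun hh => h (hh.2.2 j)), ENNReal.ofReal_zero]
  · exact Measurable.aestronglyMeasurable (by fun_prop)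

/-- under the GEV_r distribution, `E[(1+ξZ_j)^{−1/ξ}] = j` for
every `1 ≤ j ≤ r`. -/
theorem gevr_moment_exp_transform
    (μ σ ξ : ℝ) (hσ : 0 < σ) (hξ : ξ ≠ 0) (r : ℕ) (hr : 1 ≤ r)
    (j : ℕ) (hj1 : 1 ≤ j) (hjr : j ≤ r) :
    ∫ x : Fin r → ℝ,
        (1 + ξ * ((x ⟨j - 1, by omega⟩ - μ) / σ)) ^ (-1 / ξ)
        ∂(gevrMeasure μ σ ξ r)
      = (j : ℝ) := by
  obtain ⟨n, rfl⟩ : ∃ n, r = n + 1 := ⟨r - 1, by omega⟩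
  obtain ⟨k, rfl⟩ : ∃ k, j = k + 1 := ⟨j - 1, by omega⟩
  have h := gevr_main μ σ ξ hσ hξ n ⟨k, by omega⟩
  push_cast
  exact h
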